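/- For all integers j, k with 1 ≤ j ≤ k and every μ ∈ ℂ, the congruence orbit of the skew-symmetric pencil H_j(μ) ⊕ H_k(μ) is contained in the closure of the congruence orbit of the skew-symmetric pencil H_{j−1}(μ) ⊕ H_{k+1}(μ) (both pencils have size (2j+2k) × (2j+2k); H_0(μ) is the empty 0×0 pencil). -/

import Mathlib

/-!
Basic framework: a complex `m × n` matrix pencil `A - λ B` is formalized as the
pair `(A, B)` of matrices.  We define strict equivalence, congruence,
skew-symmetry, orbits, direct sums, and the cover relations for the orbit
closure hierarchies (in the Euclidean topology).
-/

open Matrix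

noncomputable section

/-- An `m × n` complex matrix pencil `A - λ B`, formalized as the pair `(A, B)`. -/
abbrev Pencil (m n : ℕ) : Type :=
  Matrix (Fin m) (Fin n) ℂ × Matrix (Fin m) (Fin n) ℂ

namespace Pencil

/-- Strict equivalence of matrix pencils: `Q⁻¹ * A * R = C` and `Q⁻¹ * B * R = D`
for some invertible `Q`, `R`. -/
def StrictEquiv {m n : ℕ} (P Q : Pencil m n) : Prop :=
  ∃ (S : Matrix (Fin m) (Fin m) ℂ) (R : Matrix (Fin n) (Fin n) ℂ),
    IsUnit S ∧ IsUnit R ∧ S⁻¹ * P.1 * R = Q.1 ∧ S⁻¹ * P.2 * R = Q.2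

/-- The strict-equivalence orbit of a pencil. -/
def orbE {m n : ℕ} (P : Pencil m n) : Set (Pencil m n) :=
  {Q | StrictEquiv P Q}

/-- A pencil `A - λ B` is skew-symmetric if `Aᵀ = -A` and `Bᵀ = -B`. -/
def IsSkew {n : ℕ} (P : Pencil n n) : Prop :=
  P.1ᵀ = -P.1 ∧ P.2ᵀ = -P.2

/-- Congruence of (square) matrix pencils: `Sᵀ * A * S = C` and `Sᵀ * B * S = D`
for some invertible `S`. -/
def Congruent {n : ℕ} (P Q : Pencil n n) : Prop :=
  ∃ S : Matrix (Fin n) (Fin n) ℂ,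
    IsUnit S ∧ Sᵀ * P.1 * S = Q.1 ∧ Sᵀ * P.2 * S = Q.2

/-- The congruence orbit of a pencil. -/
def orbC {n : ℕ} (P : Pencil n n) : Set (Pencil n n) :=
  {Q | Congruent P Q}

/-- Direct (block-diagonal) sum of two pencils. -/
def dsum {m n p q : ℕ} (P : Pencil m n) (Q : Pencil p q) : Pencil (m + p) (n + q) :=
  ((fromBlocks P.1 0 0 Q.1).submatrix finSumFinEquiv.symm finSumFinEquiv.symm,
   (fromBlocks P.2 0 0 Q.2).submatrix finSumFinEquiv.symm finSumFinEquiv.symm)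

/-- Transport a pencil along equalities of its dimensions. -/
def cast {m n m' n' : ℕ} (hm : m = m') (hn : n = n') (P : Pencil m n) : Pencil m' n' :=
  (P.1.submatrix (finCongr hm.symm) (finCongr hn.symm),
   P.2.submatrix (finCongr hm.symm) (finCongr hn.symm))

/-- `orbE P1` covers `orbE P2` in the closure hierarchy of strict-equivalence
orbits: `P1` is not strictly equivalent to `P2`, `orbE P2 ⊆ closure (orbE P1)`,
and there is no intermediate orbit strictly between them. -/
def CoversE {m n : ℕ} (P1 P2 : Pencil m n) : Prop :=
  ¬ StrictEquiv P1 P2 ∧ orbE P2 ⊆ closure (orbE P1) ∧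
    ¬ ∃ P : Pencil m n, ¬ StrictEquiv P P1 ∧ ¬ StrictEquiv P P2 ∧
        orbE P ⊆ closure (orbE P1) ∧ orbE P2 ⊆ closure (orbE P)

/-- `orbC P1` covers `orbC P2` in the closure hierarchy of congruence orbits of
skew-symmetric pencils: `P1` is not congruent to `P2`,
`orbC P2 ⊆ closure (orbC P1)`, and there is no congruence orbit of a
skew-symmetric pencil strictly between them. -/
def CoversC {n : ℕ} (P1 P2 : Pencil n n) : Prop :=
  ¬ Congruent P1 P2 ∧ orbC P2 ⊆ closure (orbC P1) ∧
    ¬ ∃ P : Pencil n n, IsSkew P ∧ ¬ Congruent P P1 ∧ ¬ Congruent P P2 ∧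
        orbC P ⊆ closure (orbC P1) ∧ orbC P2 ⊆ closure (orbC P)

end Pencil

/-! Canonical building blocks. -/

/-- The `k × k` Jordan block `J_k(μ)`. -/
def Jmat (k : ℕ) (μ : ℂ) : Matrix (Fin k) (Fin k) ℂ :=
  Matrix.of fun i j => if (j : ℕ) = (i : ℕ) then μ else if (j : ℕ) = (i : ℕ) + 1 then 1 else 0

/-- The `k × (k+1)` matrix `F_k` with ones on the superdiagonal. -/
def Fmat (k : ℕ) : Matrix (Fin k) (Fin (k + 1)) ℂ :=
  Matrix.of fun i j => if (j : ℕ) = (i : ℕ) + 1 then 1 else 0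

/-- The `k × (k+1)` matrix `G_k` with ones on the diagonal. -/
def Gmat (k : ℕ) : Matrix (Fin k) (Fin (k + 1)) ℂ :=
  Matrix.of fun i j => if (j : ℕ) = (i : ℕ) then 1 else 0

/-- The Kronecker block `E_k(μ) = J_k(μ) - λ I_k`. -/
def Eblk (k : ℕ) (μ : ℂ) : Pencil k k := (Jmat k μ, 1)

/-- The Kronecker block `E_k(∞) = I_k - λ J_k(0)`. -/
def EInfblk (k : ℕ) : Pencil k k := (1, Jmat k 0)

/-- The Kronecker block `L_k = F_k - λ G_k`. -/
def Lblk (k : ℕ) : Pencil k (k + 1) := (Fmat k, Gmat k)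

/-- The Kronecker block `L_kᵀ = F_kᵀ - λ G_kᵀ`. -/
def LTblk (k : ℕ) : Pencil (k + 1) k := ((Fmat k)ᵀ, (Gmat k)ᵀ)

/-- The skew-symmetric matrix `[[0, X], [-Xᵀ, 0]]`. -/
def skewPair {p q : ℕ} (X : Matrix (Fin p) (Fin q) ℂ) :
    Matrix (Fin (p + q)) (Fin (p + q)) ℂ :=
  (fromBlocks 0 X (-Xᵀ) 0).submatrix finSumFinEquiv.symm finSumFinEquiv.symm

/-- The skew-symmetric canonical block `H_h(μ)` (size `2h × 2h`). -/
def Hblk (h : ℕ) (μ : ℂ) : Pencil (h + h) (h + h) :=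
  (skewPair (Jmat h μ), skewPair (1 : Matrix (Fin h) (Fin h) ℂ))

/-- The skew-symmetric canonical block `K_k = H_k(∞)` (size `2k × 2k`). -/
def Kblk (k : ℕ) : Pencil (k + k) (k + k) :=
  (skewPair (1 : Matrix (Fin k) (Fin k) ℂ), skewPair (Jmat k 0))

/-- The skew-symmetric canonical block `M_m` (size `(2m+1) × (2m+1)`). -/
def Mblk (m : ℕ) : Pencil (m + (m + 1)) (m + (m + 1)) :=
  (skewPair (Fmat m), skewPair (Gmat m))

/-!
Write `E` for the matrix whose only nonzero entry is a `1` in the upper left corner. The direct sum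
`J_j(μ) ⊕ J_k(μ)` is the limit, as `ε → 0`, of the matrices `[[J_j(μ), ε E], [0, J_k(μ)]]`, which
for `ε ≠ 0` are all similar to each other, by rescaling the first block. For `ε = 1`, moving the
first basis vector to the second block, where it extends the Jordan chain, turns this matrix into
`[[J_{j-1}(μ), 0], [E, J_{k+1}(μ)]]`. For `j - 1 ≤ k` the Sylvester equation
`J_{k+1}(μ) X - X J_{j-1}(μ) = E` has a solution, a rectangular shift, so that `E` can be removed by
a further similarity. Finally, `X ↦ [[0, X], [-Xᵀ, 0]] - λ [[0, I], [-I, 0]]` is continuous and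
sends similar matrices to congruent pencils, hence carries this degeneration over to pencils.
-/

open Filter Topology

section Congruence

variable {n : ℕ} {P Q R : Pencil n n}

theorem Pencil.Congruent.trans (hPQ : Congruent P Q) (hQR : Congruent Q R) : Congruent P R := by
  obtain ⟨S, hS, hPQ₁, hPQ₂⟩ := hPQ
  obtain ⟨T, hT, hQR₁, hQR₂⟩ := hQR
  refine ⟨S * T, hS.mul hT, ?_, ?_⟩
  · rw [← hQR₁, ← hPQ₁]
    simp only [transpose_mul, Matrix.mul_assoc]
  · rw [← hQR₂, ← hPQ₂]
    simp only [transpose_mul, Matrix.mul_assoc]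

theorem Pencil.orbC_subset_closure_of_mem (h : P ∈ closure (orbC Q)) :
    orbC P ⊆ closure (orbC Q) := by
  rintro Q' ⟨S, hS, hS₁, hS₂⟩
  let congruenceBy : Pencil n n → Pencil n n := fun T => (Sᵀ * T.1 * S, Sᵀ * T.2 * S)
  have hcont : Continuous congruenceBy := by fun_prop
  have hmaps : Set.MapsTo congruenceBy (orbC Q) (orbC Q) :=
    fun T hT => Congruent.trans hT ⟨S, hS, rfl, rfl⟩
  have hQ' : congruenceBy P = Q' := Prod.ext hS₁ hS₂
  rw [← hQ']
  exact map_mem_closure hcont h hmaps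

end Congruence

section SkewPencil

variable {n : ℕ} {ι κ : Type*}

/-- The matrix `[[0, X], [-Xᵀ, 0]]`, with rows and columns relabelled along `e`. It extends
`skewPair` to matrices `X` indexed by an arbitrary type. -/
def skewMatrix (e : Fin n ≃ ι ⊕ ι) (X : Matrix ι ι ℂ) : Matrix (Fin n) (Fin n) ℂ :=
  (fromBlocks 0 X (-Xᵀ) 0).submatrix e e

/-- The skew-symmetric pencil `[[0, X], [-Xᵀ, 0]] - λ [[0, I], [-I, 0]]`, with rows and columns
relabelled along `e`. For `X = J_h(μ)` it is the block `H_h(μ)`. -/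
def skewPencil [DecidableEq ι] (e : Fin n ≃ ι ⊕ ι) (X : Matrix ι ι ℂ) : Pencil n n :=
  (skewMatrix e X, skewMatrix e 1)

theorem skewMatrix_submatrix (e : Fin n ≃ ι ⊕ ι) (f : ι ≃ κ) (X : Matrix κ κ ℂ) :
    skewMatrix e (X.submatrix f f) = skewMatrix (e.trans (f.sumCongr f)) X := by
  ext a b
  simp only [skewMatrix, submatrix_apply, Equiv.trans_apply]
  rcases e a with a | a <;> rcases e b with b | b <;> rfl

theorem skewPencil_submatrix [DecidableEq ι] [DecidableEq κ] (e : Fin n ≃ ι ⊕ ι) (f : ι ≃ κ)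
    (X : Matrix κ κ ℂ) :
    skewPencil e (X.submatrix f f) = skewPencil (e.trans (f.sumCongr f)) X := by
  rw [skewPencil, skewPencil, ← skewMatrix_submatrix, ← skewMatrix_submatrix, submatrix_one_equiv]

theorem continuous_skewPencil [DecidableEq ι] (e : Fin n ≃ ι ⊕ ι) :
    Continuous (skewPencil e) :=
  ((continuous_const.matrix_fromBlocks continuous_id continuous_id.matrix_transpose.neg
    continuous_const).matrix_submatrix e e).prodMk continuous_const

variable [Fintype ι]

theorem transpose_mul_skewMatrix_mul (e e' : Fin n ≃ ι ⊕ ι) (X U V : Matrix ι ι ℂ) :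
    ((fromBlocks Uᵀ 0 0 V).submatrix e e')ᵀ * skewMatrix e X *
      (fromBlocks Uᵀ 0 0 V).submatrix e e' = skewMatrix e' (U * X * V) := by
  simp only [skewMatrix, transpose_submatrix, submatrix_mul_equiv, fromBlocks_transpose,
    fromBlocks_multiply]
  simp [Matrix.mul_assoc]

variable [DecidableEq ι]

theorem congruent_skewPencil_of_isConj (e e' : Fin n ≃ ι ⊕ ι) {X Y : Matrix ι ι ℂ}
    (h : IsConj X Y) : Pencil.Congruent (skewPencil e X) (skewPencil e' Y) := by
  obtain ⟨U, hU⟩ := h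
  have hS : IsUnit ((fromBlocks (U : Matrix ι ι ℂ)ᵀ 0 0 ↑U⁻¹).submatrix e e') :=
    (isUnit_submatrix_equiv e e').2 <| isUnit_fromBlocks_zero₂₁.2
      ⟨(isUnit_transpose _).2 U.isUnit, U⁻¹.isUnit⟩
  refine ⟨_, hS, ?_, ?_⟩
  · rw [skewPencil, transpose_mul_skewMatrix_mul, hU.eq, Units.mul_inv_cancel_right, skewPencil]
  · rw [skewPencil, transpose_mul_skewMatrix_mul, mul_one, Units.mul_inv, skewPencil]

theorem skewPencil_mem_closure_orbC [DecidableEq κ] (e : Fin n ≃ ι ⊕ ι) (e' : Fin n ≃ κ ⊕ κ)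
    (f : ι ≃ κ) {X : Matrix ι ι ℂ} {Y : Matrix κ κ ℂ}
    (h : X ∈ closure (conjugatesOf (Y.submatrix f f))) :
    skewPencil e X ∈ closure (Pencil.orbC (skewPencil e' Y)) := by
  have hY : skewPencil e' Y = skewPencil (e'.trans (f.sumCongr f).symm) (Y.submatrix f f) := by
    rw [skewPencil_submatrix, Equiv.trans_assoc, Equiv.symm_trans_self, Equiv.trans_refl]
  rw [hY]
  exact map_mem_closure (continuous_skewPencil e) h fun _ hZ =>
    congruent_skewPencil_of_isConj _ e hZ

end SkewPencil

section DirectSum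

variable {j k n : ℕ}

/-- The relabelling that gathers the upper halves of `H_j(μ)` and `H_k(μ)`, and then their lower
halves, so that `H_j(μ) ⊕ H_k(μ)` becomes a `skewPencil`. -/
def dsumSkewEquiv (h : n = j + j + (k + k)) : Fin n ≃ (Fin j ⊕ Fin k) ⊕ (Fin j ⊕ Fin k) :=
  (finCongr h).trans <| finSumFinEquiv.symm.trans <|
    (finSumFinEquiv.symm.sumCongr finSumFinEquiv.symm).trans (Equiv.sumSumSumComm _ _ _ _)

theorem submatrix_fromBlocks_skewPair (h : n = j + j + (k + k)) (X : Matrix (Fin j) (Fin j) ℂ)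
    (Y : Matrix (Fin k) (Fin k) ℂ) :
    ((fromBlocks (skewPair X) 0 0 (skewPair Y)).submatrix finSumFinEquiv.symm
      finSumFinEquiv.symm).submatrix (finCongr h) (finCongr h) =
      skewMatrix (dsumSkewEquiv h) (fromBlocks X 0 0 Y) := by
  ext a b
  simp only [skewMatrix, dsumSkewEquiv, skewPair, submatrix_apply, Equiv.trans_apply]
  rcases finSumFinEquiv.symm (finCongr h a) with a | a <;>
    rcases finSumFinEquiv.symm (finCongr h b) with b | b <;>
    rcases ha : finSumFinEquiv.symm a with a' | a' <;>
    rcases hb : finSumFinEquiv.symm b with b' | b' <;>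
    simp [ha, hb]

theorem cast_dsum_Hblk (h : n = j + j + (k + k)) (μ : ℂ) :
    Pencil.cast h.symm h.symm (Pencil.dsum (Hblk j μ) (Hblk k μ)) =
      skewPencil (dsumSkewEquiv h) (fromBlocks (Jmat j μ) 0 0 (Jmat k μ)) := by
  refine Prod.ext (submatrix_fromBlocks_skewPair h _ _) ?_
  rw [skewPencil, ← fromBlocks_one]
  exact submatrix_fromBlocks_skewPair h 1 1

end DirectSum

section Similarity

variable {R 𝕜 m n : Type*} [Fintype m] [DecidableEq m] [Fintype n] [DecidableEq n]

theorem isConj_submatrix_equiv [Semiring R] (f : m ≃ n) {A B : Matrix n n R} (h : IsConj A B) :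
    IsConj (A.submatrix f f) (B.submatrix f f) :=
  (reindexRingEquiv R f.symm).toMonoidHom.map_isConj h

theorem isConj_fromBlocks_mul_sub_mul [Ring R] (A : Matrix m m R) (B : Matrix n n R)
    (X : Matrix n m R) :
    IsConj (fromBlocks A 0 (B * X - X * A) B) (fromBlocks A 0 0 B) := by
  refine ⟨⟨fromBlocks 1 0 X 1, fromBlocks 1 0 (-X) 1, ?_, ?_⟩, ?_⟩ <;>
    simp [SemiconjBy, fromBlocks_multiply]

theorem isConj_fromBlocks_smul [CommRing R] (A : Matrix m m R) (B : Matrix n n R)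
    (C : Matrix m n R) (ε : Rˣ) :
    IsConj (fromBlocks A C 0 B) (fromBlocks A (ε • C) 0 B) := by
  refine ⟨⟨fromBlocks (ε • 1) 0 0 1, fromBlocks (ε⁻¹ • 1) 0 0 1, ?_, ?_⟩, ?_⟩ <;>
    simp [SemiconjBy, fromBlocks_multiply]

theorem fromBlocks_diagonal_mem_closure_conjugatesOf [NontriviallyNormedField 𝕜]
    (A : Matrix m m 𝕜) (B : Matrix n n 𝕜) (C : Matrix m n 𝕜) :
    fromBlocks A 0 0 B ∈ closure (conjugatesOf (fromBlocks A C 0 B)) := by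
  have hcont : Continuous fun ε : 𝕜 => fromBlocks A (ε • C) 0 B :=
    continuous_const.matrix_fromBlocks (by fun_prop) continuous_const continuous_const
  have hlim : Tendsto (fun ε : 𝕜 => fromBlocks A (ε • C) 0 B) (𝓝[≠] 0) (𝓝 (fromBlocks A 0 0 B)) :=
    (hcont.tendsto' 0 _ (by rw [zero_smul])).mono_left nhdsWithin_le_nhds
  refine mem_closure_of_tendsto hlim ?_
  filter_upwards [self_mem_nhdsWithin] with ε hε
  exact isConj_fromBlocks_smul A B C (Units.mk0 ε hε)

end Similarity

section Jordan

variable {p q : ℕ}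

/-- The `p × q` matrix whose only nonzero entry is a `1` in the upper left corner; it is zero
when `p = 0` or `q = 0`. -/
def cornerMatrix (p q : ℕ) : Matrix (Fin p) (Fin q) ℂ :=
  of fun a b => if (a : ℕ) = 0 ∧ (b : ℕ) = 0 then 1 else 0

/-- The relabelling that detaches the first index of the left summand and puts it in front of
the right summand. -/
def moveHeadEquiv (m k : ℕ) : Fin (m + 1) ⊕ Fin k ≃ Fin m ⊕ Fin (k + 1) where
  toFun := Sum.elim (Fin.cases (Sum.inr 0) Sum.inl) (Sum.inr ∘ Fin.succ)
  invFun := Sum.elim (Sum.inl ∘ Fin.succ) (Fin.cases (Sum.inl 0) Sum.inr)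
  left_inv := by
    rintro (a | a)
    · cases a using Fin.cases <;> rfl
    · rfl
  right_inv := by
    rintro (a | a)
    · rfl
    · cases a using Fin.cases <;> rfl

theorem submatrix_moveHeadEquiv_fromBlocks_Jmat (m k : ℕ) (μ : ℂ) :
    (fromBlocks (Jmat m μ) 0 (cornerMatrix (k + 1) m) (Jmat (k + 1) μ)).submatrix
        (moveHeadEquiv m k) (moveHeadEquiv m k) =
      fromBlocks (Jmat (m + 1) μ) (cornerMatrix (m + 1) k) 0 (Jmat k μ) := by
  ext (a | a) (b | b)
  · cases a using Fin.cases <;> cases b using Fin.cases <;>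
      simp [moveHeadEquiv, Jmat, cornerMatrix]
  · cases a using Fin.cases <;> simp [moveHeadEquiv, Jmat, cornerMatrix]
  · cases b using Fin.cases <;> simp [moveHeadEquiv, Jmat, cornerMatrix]
  · simp [moveHeadEquiv, Jmat]

/-- The `p × q` matrix with ones on the subdiagonal, the rectangular shift that solves the Sylvester
equation for two Jordan blocks with right-hand side `cornerMatrix p q`. -/
def subdiagonalMatrix (p q : ℕ) : Matrix (Fin p) (Fin q) ℂ :=
  of fun a b => if (a : ℕ) = b + 1 then 1 else 0

theorem Jmat_mul_subdiagonalMatrix_apply (h : q < p) (μ : ℂ) (a : Fin p) (b : Fin q) :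
    (Jmat p μ * subdiagonalMatrix p q) a b =
      if (b : ℕ) + 1 = a then μ else if (b : ℕ) = a then 1 else 0 := by
  have hb (c : Fin p) : (c : ℕ) = b + 1 ↔ c = ⟨b + 1, by omega⟩ := by rw [Fin.ext_iff]
  simp [mul_apply, subdiagonalMatrix, hb, Jmat]

theorem subdiagonalMatrix_mul_Jmat_apply (μ : ℂ) (a : Fin p) (b : Fin q) :
    (subdiagonalMatrix p q * Jmat q μ) a b =
      if (b : ℕ) + 1 = a then μ else if (b : ℕ) = a ∧ (a : ℕ) ≠ 0 then 1 else 0 := by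
  simp only [mul_apply, subdiagonalMatrix, of_apply, ite_mul, one_mul, zero_mul]
  by_cases ha : ∃ c : Fin q, (a : ℕ) = c + 1
  · obtain ⟨c, hc⟩ := ha
    have hac (d : Fin q) : (a : ℕ) = d + 1 ↔ d = c := by rw [Fin.ext_iff]; omega
    simp only [hac, Finset.sum_ite_eq', Finset.mem_univ, if_true]
    simp [Jmat, hc]
  · have ha_range : ¬(1 ≤ (a : ℕ) ∧ (a : ℕ) ≤ q) := fun ⟨h₁, _⟩ =>
      ha ⟨⟨a - 1, by omega⟩, (Nat.sub_add_cancel h₁).symm⟩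
    rw [Finset.sum_eq_zero fun d _ => if_neg fun hd => ha ⟨d, hd⟩, if_neg (by omega),
      if_neg (by omega)]

theorem Jmat_mul_subdiagonalMatrix_sub (h : q < p) (μ : ℂ) :
    Jmat p μ * subdiagonalMatrix p q - subdiagonalMatrix p q * Jmat q μ = cornerMatrix p q := by
  ext a b
  rw [Matrix.sub_apply, Jmat_mul_subdiagonalMatrix_apply h, subdiagonalMatrix_mul_Jmat_apply,
    cornerMatrix, of_apply]
  split_ifs <;> first | omega | simp

theorem isConj_fromBlocks_Jmat_cornerMatrix (h : q < p) (μ : ℂ) :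
    IsConj (fromBlocks (Jmat q μ) 0 (cornerMatrix p q) (Jmat p μ))
      (fromBlocks (Jmat q μ) 0 0 (Jmat p μ)) := by
  rw [← Jmat_mul_subdiagonalMatrix_sub h μ]
  exact isConj_fromBlocks_mul_sub_mul _ _ _

theorem fromBlocks_Jmat_mem_closure_conjugatesOf {m k : ℕ} (h : m ≤ k) (μ : ℂ) :
    fromBlocks (Jmat (m + 1) μ) 0 0 (Jmat k μ) ∈
      closure (conjugatesOf ((fromBlocks (Jmat m μ) 0 0 (Jmat (k + 1) μ)).submatrix
        (moveHeadEquiv m k) (moveHeadEquiv m k))) := by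
  have hconj := isConj_submatrix_equiv (moveHeadEquiv m k)
    (isConj_fromBlocks_Jmat_cornerMatrix (Nat.lt_succ_of_le h) μ)
  rw [← hconj.conjugatesOf_eq, submatrix_moveHeadEquiv_fromBlocks_Jmat]
  exact fromBlocks_diagonal_mem_closure_conjugatesOf _ _ _

end Jordan

/-- **Rule 2 transition as an orbit closure inclusion**: for `1 ≤ j ≤ k` and
`μ ∈ ℂ`, `orbᶜ (H_j(μ) ⊕ H_k(μ)) ⊆ closure (orbᶜ (H_{j-1}(μ) ⊕ H_{k+1}(μ)))`. -/
theorem orbC_H_merge_subset_closure (j k : ℕ) (μ : ℂ) (hj : 1 ≤ j) (hjk : j ≤ k) :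
    Pencil.orbC (Pencil.cast (by omega) (by omega)
        (Pencil.dsum (Hblk j μ) (Hblk k μ)) :
          Pencil (2 * j + 2 * k) (2 * j + 2 * k)) ⊆
      closure (Pencil.orbC (Pencil.cast (by omega) (by omega)
        (Pencil.dsum (Hblk (j - 1) μ) (Hblk (k + 1) μ)) :
          Pencil (2 * j + 2 * k) (2 * j + 2 * k))) := by
  obtain ⟨m, rfl⟩ := Nat.exists_eq_add_of_le' hj
  refine Pencil.orbC_subset_closure_of_mem ?_
  rw [cast_dsum_Hblk (by omega), cast_dsum_Hblk (by omega)]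
  exact skewPencil_mem_closure_orbC _ _ (moveHeadEquiv m k)
    (fromBlocks_Jmat_mem_closure_conjugatesOf (by omega) μ)
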